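/- Context extrusion: for all structures R, T and every context S{ }, there is a derivation using only the rules q↓, s, r↓ (applied in arbitrary contexts) from premise S{[R;T]} to conclusion [S{R};T]. -/

import Mathlib

namespace DI

/-- SBVr structures: unit, atoms and their duals, par, copar, seq, renaming binder. -/
inductive Struct : Type
  | unit : Struct
  | atom : ℕ → Struct
  | natom : ℕ → Struct
  | par : Struct → Struct → Struct
  | copar : Struct → Struct → Struct
  | seq : Struct → Struct → Struct
  | ren : ℕ → Struct → Struct
  deriving DecidableEq

namespace Struct

/-- Negation of structures (De Morgan: swaps par/copar, fixes seq and renaming). -/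
def neg : Struct → Struct
  | unit => unit
  | atom a => natom a
  | natom a => atom a
  | par R T => copar R.neg T.neg
  | copar R T => par R.neg T.neg
  | seq R T => seq R.neg T.neg
  | ren a R => ren a R.neg

/-- Free atom names of a structure. -/
def free : Struct → Finset ℕ
  | unit => ∅
  | atom a => {a}
  | natom a => {a}
  | par R T => R.free ∪ T.free
  | copar R T => R.free ∪ T.free
  | seq R T => R.free ∪ T.free
  | ren a R => R.free.erase a

/-- All atom names occurring in a structure (free, bound, and binder names). -/
def names : Struct → Finset ℕ
  | unit => ∅
  | atom a => {a}
  | natom a => {a}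
  | par R T => R.names ∪ T.names
  | copar R T => R.names ∪ T.names
  | seq R T => R.names ∪ T.names
  | ren a R => insert a R.names

/-- `rename b a R` is `R{b/a}`: replace each free occurrence of atom `a` by `b`
(and `ā` by `b̄`). -/
def rename (b a : ℕ) : Struct → Struct
  | unit => unit
  | atom c => if c = a then atom b else atom c
  | natom c => if c = a then natom b else natom c
  | par R T => par (rename b a R) (rename b a T)
  | copar R T => copar (rename b a R) (rename b a T)
  | seq R T => seq (rename b a R) (rename b a T)
  | ren c R => if c = a then ren c R else ren c (rename b a R)

/-- Size of a structure: the number of occurrences of atoms in it. -/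
def size : Struct → ℕ
  | unit => 0
  | atom _ => 1
  | natom _ => 1
  | par R T => R.size + T.size
  | copar R T => R.size + T.size
  | seq R T => R.size + T.size
  | ren _ R => R.size

end Struct

open Struct

/-- Structural congruence on structures. -/
inductive Cong : Struct → Struct → Prop
  | refl (R) : Cong R R
  | symm : Cong R T → Cong T R
  | trans : Cong R T → Cong T U → Cong R U
  | par_congr : Cong R R' → Cong T T' → Cong (par R T) (par R' T')
  | copar_congr : Cong R R' → Cong T T' → Cong (copar R T) (copar R' T')
  | seq_congr : Cong R R' → Cong T T' → Cong (seq R T) (seq R' T')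
  | ren_congr (a) : Cong R R' → Cong (ren a R) (ren a R')
  | par_comm (R T) : Cong (par R T) (par T R)
  | par_assoc (R T U) : Cong (par (par R T) U) (par R (par T U))
  | par_unit (R) : Cong (par R unit) R
  | copar_comm (R T) : Cong (copar R T) (copar T R)
  | copar_assoc (R T U) : Cong (copar (copar R T) U) (copar R (copar T U))
  | copar_unit (R) : Cong (copar R unit) R
  | seq_assoc (R T U) : Cong (seq (seq R T) U) (seq R (seq T U))
  | seq_unit_r (R) : Cong (seq R unit) R
  | seq_unit_l (R) : Cong (seq unit R) R
  /-- `R ≈ ⌊a⌋(R{a/b})` for a capture-free substitution of `a` for `b`. -/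
  | ren_intro (a b : ℕ) (R : Struct) : a ∉ R.names →
      Cong R (ren a (R.rename a b))
  /-- α-equivalence of renaming. -/
  | ren_alpha (a b : ℕ) (R : Struct) : a ∉ R.names →
      Cong (ren b R) (ren a (R.rename a b))
  /-- Vacuous renaming. -/
  | ren_vac (a : ℕ) (R : Struct) : a ∉ R.free → Cong (ren a R) R
  /-- Commutation of renaming binders. -/
  | ren_comm (a b : ℕ) (R : Struct) : Cong (ren a (ren b R)) (ren b (ren a R))

/-- Names of the inference rules of SBVr. -/
inductive RuleName : Type
  | aiDown | qDown | sw | rDown | aiUp | qUp | rUp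
  deriving DecidableEq

/-- Shallow rule instances, read top-down: `Shallow ρ T R` means the rule `ρ`
has premise `T` and conclusion `R`. -/
inductive Shallow : RuleName → Struct → Struct → Prop
  | aiDown (a) : Shallow .aiDown unit (par (atom a) (natom a))
  | qDown (R T U V) :
      Shallow .qDown (seq (par R T) (par U V)) (par (seq R U) (seq T V))
  | sw (R T U) : Shallow .sw (copar (par R U) T) (par (copar R T) U)
  | rDown (a R T) :
      Shallow .rDown (ren a (par R T)) (par (ren a R) (ren a T))
  | aiUp (a) : Shallow .aiUp (copar (atom a) (natom a)) unit
  | qUp (R T U V) :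
      Shallow .qUp (copar (seq R T) (seq U V)) (seq (copar R U) (copar T V))
  | rUp (a R T) :
      Shallow .rUp (copar (ren a R) (ren a T)) (ren a (copar R T))

/-- Closure of a (premise, conclusion) relation under arbitrary contexts
and structural congruence. -/
inductive CtxClosure (r : Struct → Struct → Prop) : Struct → Struct → Prop
  | base : r T R → CtxClosure r T R
  | parL (U) : CtxClosure r T R → CtxClosure r (par T U) (par R U)
  | parR (U) : CtxClosure r T R → CtxClosure r (par U T) (par U R)
  | coparL (U) : CtxClosure r T R → CtxClosure r (copar T U) (copar R U)
  | coparR (U) : CtxClosure r T R → CtxClosure r (copar U T) (copar U R)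
  | seqL (U) : CtxClosure r T R → CtxClosure r (seq T U) (seq R U)
  | seqR (U) : CtxClosure r T R → CtxClosure r (seq U T) (seq U R)
  | ren (a) : CtxClosure r T R → CtxClosure r (ren a T) (ren a R)
  | congr : Cong T T' → CtxClosure r T' R' → Cong R' R → CtxClosure r T R

/-- One inference step in a system given by a set of rule names. -/
def Step (rules : RuleName → Prop) : Struct → Struct → Prop :=
  CtxClosure (fun T R => ∃ ρ, rules ρ ∧ Shallow ρ T R)

/-- `Deriv rules T R`: there is a derivation in the system `rules` with
premise `T` and conclusion `R` (a finite composition of rule instances,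
modulo structural congruence). -/
def Deriv (rules : RuleName → Prop) (T R : Struct) : Prop :=
  Relation.ReflTransGen (fun X Y => Step rules X Y ∨ Cong X Y) T R

/-- `Prov rules R`: `R` is provable, i.e. derivable from the unit. -/
def Prov (rules : RuleName → Prop) (R : Struct) : Prop :=
  Deriv rules unit R

/-- The system BVr: the down rules ai↓, q↓, s, r↓. -/
def BVr : RuleName → Prop := fun ρ =>
  ρ = .aiDown ∨ ρ = .qDown ∨ ρ = .sw ∨ ρ = .rDown

/-- The system SBVr: BVr plus the up rules ai↑, q↑, r↑. -/
def SBVr : RuleName → Prop := fun _ => True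

/-- The system SBV: the renaming-free fragment ai↓, q↓, s, ai↑, q↑. -/
def SBV : RuleName → Prop := fun ρ => ρ ≠ .rDown ∧ ρ ≠ .rUp

/-- BVr extended with the up rule q↑. -/
def BVrQ : RuleName → Prop := fun ρ => BVr ρ ∨ ρ = .qUp

/-- Contexts: structures with a single hole. -/
inductive Ctx : Type
  | hole : Ctx
  | parL (C : Ctx) (U : Struct) : Ctx
  | parR (U : Struct) (C : Ctx) : Ctx
  | coparL (C : Ctx) (U : Struct) : Ctx
  | coparR (U : Struct) (C : Ctx) : Ctx
  | seqL (C : Ctx) (U : Struct) : Ctx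
  | seqR (U : Struct) (C : Ctx) : Ctx
  | ren (a : ℕ) (C : Ctx) : Ctx

/-- Filling the hole of a context with a structure. -/
def Ctx.fill : Ctx → Struct → Struct
  | .hole, V => V
  | .parL C U, V => .par (C.fill V) U
  | .parR U C, V => .par U (C.fill V)
  | .coparL C U, V => .copar (C.fill V) U
  | .coparR U C, V => .copar U (C.fill V)
  | .seqL C U, V => .seq (C.fill V) U
  | .seqR U C, V => .seq U (C.fill V)
  | .ren a C, V => .ren a (C.fill V)

/-- The renaming binders a context places over its hole. -/
def Ctx.binders : Ctx → Finset ℕ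
  | .hole => ∅
  | .parL C _ => C.binders
  | .parR _ C => C.binders
  | .coparL C _ => C.binders
  | .coparR _ C => C.binders
  | .seqL C _ => C.binders
  | .seqR _ C => C.binders
  | .ren a C => insert a C.binders

/-- Lambda terms with explicit substitutions:
variables, abstractions, applications, and explicit substitutions `M⟨x:=P⟩`. -/
inductive Term : Type
  | var : ℕ → Term
  | lam : ℕ → Term → Term
  | app : Term → Term → Term
  | esub : Term → ℕ → Term → Term
  deriving DecidableEq

namespace Term

/-- Free variables of a term. -/
def fv : Term → Finset ℕ
  | var x => {x}
  | lam x M => M.fv.erase x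
  | app M N => M.fv ∪ N.fv
  | esub M x P => M.fv.erase x ∪ P.fv

/-- All variable names occurring in a term (free or bound). -/
def names : Term → Finset ℕ
  | var x => {x}
  | lam x M => insert x M.names
  | app M N => M.names ∪ N.names
  | esub M x P => insert x (M.names ∪ P.names)

/-- Linearity: bound variables occur free in their scope exactly once, and the
free variables of the components of applications and substitutions are disjoint. -/
def Linear : Term → Prop
  | var _ => True
  | lam x M => x ∈ M.fv ∧ M.Linear
  | app M N => M.Linear ∧ N.Linear ∧ Disjoint M.fv N.fv
  | esub M x P => x ∈ M.fv ∧ M.Linear ∧ P.Linear ∧ Disjoint M.fv P.fv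

end Term

/-- β-reduction with explicit substitutions. -/
inductive Beta : Term → Term → Prop
  | intro (x M N) : Beta (.app (.lam x M) N) (.esub M x N)
  | var (x P) : Beta (.esub (.var x) x P) P
  | lam (y x M P) : Beta (.esub (.lam y M) x P) (.lam y (.esub M x P))
  | appR (M N x P) : x ∈ N.fv → Beta (.esub (.app M N) x P) (.app M (.esub N x P))
  | appL (M N x P) : x ∈ M.fv → Beta (.esub (.app M N) x P) (.app (.esub M x P) N)

/-- The rewriting relation `M ⇒ N`: reflexive, contextual and transitive
closure of β-reduction with explicit substitutions. -/
inductive Red : Term → Term → Prop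
  | refl (M) : Red M M
  | beta : Beta M N → Red M N
  | trans : Red M P → Red P N → Red M N
  | lam (x) : Red M N → Red (.lam x M) (.lam x N)
  | appL : Red M N → Red (.app M P) (.app N P)
  | appR : Red M N → Red (.app P M) (.app P N)
  | esubL (x) : Red M N → Red (.esub M x P) (.esub N x P)
  | esubR (x) : Red M N → Red (.esub P x M) (.esub P x N)

/-- A name fresh for a given finite set of names. -/
def freshName (s : Finset ℕ) : ℕ := (s.sup id) + 1

/-- The map `⟦·⟧` from linear lambda terms with explicit substitutions to
SBVr structures; `Term.tr M o` is `⟦M⟧o`. -/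
def Term.tr : Term → ℕ → Struct
  | .var x, o => .seq (.atom x) (.natom o)
  | .lam x M, o =>
      let p := freshName (insert o (insert x M.names))
      .ren x (.ren p (.par (M.tr p) (.copar (.atom p) (.natom o))))
  | .app M N, o =>
      let q := freshName (insert o (M.names ∪ N.names))
      let p := freshName (insert q (insert o (M.names ∪ N.names)))
      .ren p (.par (M.tr p) (.par (.ren q (N.tr q)) (.copar (.atom p) (.natom o))))
  | .esub M x P, o => .ren x (.par (M.tr o) (P.tr x))

/-- The derived rules (premise, conclusion) on translated terms:
o-ren, s-intro, s-var, s-λ, s-@l, s-@r. -/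
inductive DerivedRule : Struct → Struct → Prop
  | oren (M : Term) (o p : ℕ) : p ∉ M.names → p ≠ o →
      DerivedRule (M.tr o) (.par (M.tr p) (.copar (.atom p) (.natom o)))
  | sIntro (M N : Term) (x o : ℕ) :
      DerivedRule ((Term.esub M x N).tr o) ((Term.app (.lam x M) N).tr o)
  | sVar (P : Term) (x o : ℕ) :
      DerivedRule (P.tr o) ((Term.esub (.var x) x P).tr o)
  | sLam (M P : Term) (x y o : ℕ) :
      DerivedRule ((Term.lam y (.esub M x P)).tr o) ((Term.esub (.lam y M) x P).tr o)
  | sAppL (M N P : Term) (x o : ℕ) : x ∈ M.fv →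
      DerivedRule ((Term.app (.esub M x P) N).tr o) ((Term.esub (.app M N) x P).tr o)
  | sAppR (M N P : Term) (x o : ℕ) : x ∈ N.fv →
      DerivedRule ((Term.app M (.esub N x P)).tr o) ((Term.esub (.app M N) x P).tr o)

/-- Derivations composed only of instances of the derived rules
(applied in arbitrary contexts, modulo congruence). -/
def DerivedDeriv : Struct → Struct → Prop :=
  Relation.ReflTransGen (fun X Y => CtxClosure DerivedRule X Y ∨ Cong X Y)

end DI

namespace DI

/-- The rules q↓, s, r↓. -/
def ExtRules : RuleName → Prop := fun ρ => ρ = .qDown ∨ ρ = .sw ∨ ρ = .rDown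

/-- Lifting derivations through a context constructor. -/
theorem deriv_lift {rules : RuleName → Prop} (f : Struct → Struct)
    (h1 : ∀ X Y, Step rules X Y → Step rules (f X) (f Y))
    (h2 : ∀ X Y, Cong X Y → Cong (f X) (f Y)) {X Y : Struct}
    (h : Deriv rules X Y) : Deriv rules (f X) (f Y) := by
  unfold Deriv at h ⊢
  induction h with
  | refl => exact Relation.ReflTransGen.refl
  | tail _ hab ih =>
    refine Relation.ReflTransGen.tail ih ?_
    rcases hab with k | k
    · exact Or.inl (h1 _ _ k)
    · exact Or.inr (h2 _ _ k)

/-- A single shallow step modulo congruence is a derivation. -/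
theorem deriv_shallow {rules : RuleName → Prop} {ρ : RuleName} {X X' Y Y' : Struct}
    (hρ : rules ρ) (hX : Cong X X') (h : Shallow ρ X' Y') (hY : Cong Y' Y) :
    Deriv rules X Y :=
  Relation.ReflTransGen.single (Or.inl (CtxClosure.congr hX (CtxClosure.base ⟨ρ, hρ, h⟩) hY))

theorem deriv_cong {rules : RuleName → Prop} {X Y : Struct} (h : Cong X Y) :
    Deriv rules X Y :=
  Relation.ReflTransGen.single (Or.inr h)

/-- Context extrusion: there is a derivation using only q↓, s, r↓ from premise
`S{[R;T]}` to conclusion `[S{R};T]`, provided the hole of `S{ }` does not occur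
beneath a renaming binder capturing free atoms of `T`. -/
theorem context_extrusion (R T : Struct) (S : Ctx)
    (hS : ∀ b ∈ S.binders, b ∉ T.free) :
    Deriv ExtRules (S.fill (.par R T)) (.par (S.fill R) T) := by
  induction S with
  | hole => exact Relation.ReflTransGen.refl
  | parL C U ih =>
    refine Relation.ReflTransGen.trans (deriv_lift (fun X => Struct.par X U)
      (fun _ _ h => CtxClosure.parL U h) (fun _ _ h => .par_congr h (.refl U)) (ih hS)) ?_
    exact deriv_cong (.trans (.par_assoc _ _ _)
      (.trans (.par_congr (.refl _) (.par_comm _ _)) (.symm (.par_assoc _ _ _))))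
  | parR U C ih =>
    refine Relation.ReflTransGen.trans (deriv_lift (fun X => Struct.par U X)
      (fun _ _ h => CtxClosure.parR U h) (fun _ _ h => .par_congr (.refl U) h) (ih hS)) ?_
    exact deriv_cong (.symm (.par_assoc _ _ _))
  | coparL C U ih =>
    refine Relation.ReflTransGen.trans (deriv_lift (fun X => Struct.copar X U)
      (fun _ _ h => CtxClosure.coparL U h) (fun _ _ h => .copar_congr h (.refl U)) (ih hS)) ?_
    exact deriv_shallow (Or.inr (Or.inl rfl)) (.refl _) (.sw _ _ _) (.refl _)
  | coparR U C ih =>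
    refine Relation.ReflTransGen.trans (deriv_lift (fun X => Struct.copar U X)
      (fun _ _ h => CtxClosure.coparR U h) (fun _ _ h => .copar_congr (.refl U) h) (ih hS)) ?_
    exact deriv_shallow (Or.inr (Or.inl rfl)) (.copar_comm _ _) (.sw _ _ _)
      (.par_congr (.copar_comm _ _) (.refl _))
  | seqL C U ih =>
    refine Relation.ReflTransGen.trans (deriv_lift (fun X => Struct.seq X U)
      (fun _ _ h => CtxClosure.seqL U h) (fun _ _ h => .seq_congr h (.refl U)) (ih hS)) ?_
    exact deriv_shallow (Or.inl rfl) (.seq_congr (.refl _) (.symm (.par_unit U)))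
      (.qDown _ _ _ _) (.par_congr (.refl _) (.seq_unit_r T))
  | seqR U C ih =>
    refine Relation.ReflTransGen.trans (deriv_lift (fun X => Struct.seq U X)
      (fun _ _ h => CtxClosure.seqR U h) (fun _ _ h => .seq_congr (.refl U) h) (ih hS)) ?_
    exact deriv_shallow (Or.inl rfl) (.seq_congr (.symm (.par_unit U)) (.refl _))
      (.qDown _ _ _ _) (.par_congr (.refl _) (.seq_unit_l T))
  | ren a C ih =>
    have ha : a ∉ T.free := hS a (Finset.mem_insert_self _ _)
    refine Relation.ReflTransGen.trans (deriv_lift (fun X => Struct.ren a X)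
      (fun _ _ h => CtxClosure.ren a h) (fun _ _ h => .ren_congr a h)
      (ih (fun b hb => hS b (Finset.mem_insert_of_mem hb)))) ?_
    exact deriv_shallow (Or.inr (Or.inr rfl)) (.refl _) (.rDown _ _ _)
      (.par_congr (.refl _) (.ren_vac a T ha))

end DI
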